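/- Let p and q be positive integers and let τ be a permutation of [p+q] which is (p,q)-disconnected. Then #(τ) + #(τ⁻¹γ) ≤ p+q+2, and τ belongs to S_ann-nc(p,q) if and only if #(τ) + #(τ⁻¹γ) = p+q+2. -/

import Mathlib

/-- The permutation induced by `f` on the subset `B`: an element `b` is sent to the first
element of the sequence `f b, f (f b), f (f (f b)), ...` that lies in `B`
(and is left fixed if no iterate ever returns to `B`). -/
noncomputable def induced {α : Type*} (f : α → α) (B : Set α) (b : α) : α := by
  classical
  exact if h : ∃ k, 0 < k ∧ f^[k] b ∈ B then f^[Nat.find h] b else b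

/-- `A` is an orbit of the permutation `τ`. -/
def IsOrbit {α : Type*} (τ : Equiv.Perm α) (A : Set α) : Prop :=
  ∃ a, A = {b | τ.SameCycle a b}

/-- The number of orbits of `τ` (fixed points count as orbits). -/
noncomputable def numOrbits {α : Type*} (τ : Equiv.Perm α) : ℕ :=
  Set.ncard {A : Set α | IsOrbit τ A}

/-- `induced f S` acts on `a, b, c` as the 3-cycle `(a, b, c)`. -/
def MapsCyc3 {α : Type*} (f : α → α) (S : Set α) (a b c : α) : Prop :=
  induced f S a = b ∧ induced f S b = c ∧ induced f S c = a

/-- `induced f S` acts on `a, b, c, d` as the 4-cycle `(a, b, c, d)`. -/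
def MapsCyc4 {α : Type*} (f : α → α) (S : Set α) (a b c d : α) : Prop :=
  induced f S a = b ∧ induced f S b = c ∧ induced f S c = d ∧ induced f S d = a

/-- `induced f S` acts on `a, b, c, d` as the product of transpositions `(a, c)(b, d)`. -/
def MapsSwap2 {α : Type*} (f : α → α) (S : Set α) (a b c d : α) : Prop :=
  induced f S a = c ∧ induced f S c = a ∧ induced f S b = d ∧ induced f S d = b

/-- `induced f S` acts on `x, y` as the transposition `(x, y)`. -/
def MapsSwap {α : Type*} (f : α → α) (S : Set α) (x y : α) : Prop :=
  induced f S x = y ∧ induced f S y = x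

/-- `σ` is standard with respect to the "forward cycle" `γ₀`, i.e. `σ∣B = γ₀∣B` for
every orbit `B` of `σ`. -/
def DiscStandardRel {n : ℕ} (γ₀ σ : Equiv.Perm (Fin n)) : Prop :=
  ∀ A : Set (Fin n), IsOrbit σ A → ∀ b ∈ A, induced (⇑σ) A b = induced (⇑γ₀) A b

/-- The orbit partition of `σ` has no crossing: there are no `a < b < c < d` with
`a, c` in one orbit and `b, d` in a different orbit. -/
def OrbitsNoCrossing {n : ℕ} (σ : Equiv.Perm (Fin n)) : Prop :=
  ¬ ∃ a b c d : Fin n, a < b ∧ b < c ∧ c < d ∧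
      σ.SameCycle a c ∧ σ.SameCycle b d ∧ ¬ σ.SameCycle a b

/-- Disc non-crossing relative to a given forward cycle `γ₀`. -/
def DiscNCRel {n : ℕ} (γ₀ σ : Equiv.Perm (Fin n)) : Prop :=
  DiscStandardRel γ₀ σ ∧ OrbitsNoCrossing σ

/-- The set `S_disc-nc(n)` of disc non-crossing permutations of `[n]`
(here `[n] = {1, …, n}` is modelled by `Fin n`, and the forward cycle
`γ₀ = (1, 2, …, n)` is `finRotate n`). -/
def DiscNC {n : ℕ} (σ : Equiv.Perm (Fin n)) : Prop :=
  DiscNCRel (finRotate n) σ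

/-- The external points `{1, …, p}` (0-indexed: values `< p`). -/
def extSet (p q : ℕ) : Set (Fin (p + q)) := {i | (i : ℕ) < p}

/-- The internal points `{p+1, …, p+q}` (0-indexed: values `≥ p`). -/
def intSet (p q : ℕ) : Set (Fin (p + q)) := {i | p ≤ (i : ℕ)}

/-- `γ_ext = (1, 2, …, p)`, the forward cycle on the external points. -/
def gammaExt (p q : ℕ) : Equiv.Perm (Fin (p + q)) :=
  ((List.finRange (p + q)).take p).formPerm

/-- `γ_int = (p+1, p+2, …, p+q)`, the forward cycle on the internal points. -/
def gammaInt (p q : ℕ) : Equiv.Perm (Fin (p + q)) :=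
  ((List.finRange (p + q)).drop p).formPerm

/-- `γ = γ_ext · γ_int`. -/
def gammaAnn (p q : ℕ) : Equiv.Perm (Fin (p + q)) := gammaExt p q * gammaInt p q

/-- `λ_{x,y}`: the permutation fixing `x` and `y` and cycling the remaining points as
`(γ_ext(x), γ_ext²(x), …, γ_ext^{p-1}(x), γ_int(y), γ_int²(y), …, γ_int^{q-1}(y))`. -/
def lamPerm (p q : ℕ) (x y : Fin (p + q)) : Equiv.Perm (Fin (p + q)) :=
  (((List.range (p - 1)).map fun k => (gammaExt p q ^ (k + 1)) x) ++
    ((List.range (q - 1)).map fun k => (gammaInt p q ^ (k + 1)) y)).formPerm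

/-- `τ` is standard in `(p,q)`-annular sense. -/
def AnnStandard (p q : ℕ) (τ : Equiv.Perm (Fin (p + q))) : Prop :=
  (∀ A : Set (Fin (p + q)), IsOrbit τ A →
    (∀ b ∈ A ∩ extSet p q,
        induced (⇑τ) (A ∩ extSet p q) b = induced (⇑(gammaExt p q)) (A ∩ extSet p q) b) ∧
    (∀ b ∈ A ∩ intSet p q,
        induced (⇑τ) (A ∩ intSet p q) b = induced (⇑(gammaInt p q)) (A ∩ intSet p q) b)) ∧
  (∀ A : Set (Fin (p + q)), IsOrbit τ A →
    (A ∩ extSet p q).Nonempty → (A ∩ intSet p q).Nonempty →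
    (∃! a, a ∈ A ∩ extSet p q ∧ τ a ∈ intSet p q) ∧
    (∃! a, a ∈ A ∩ intSet p q ∧ τ a ∈ extSet p q))

/-- The annular crossing pattern (AC-1). -/
def AC1 (p q : ℕ) (τ : Equiv.Perm (Fin (p + q))) : Prop :=
  ∃ a b c d : Fin (p + q), List.Pairwise (· ≠ ·) [a, b, c, d] ∧
    MapsCyc4 (⇑(gammaAnn p q)) {a, b, c, d} a b c d ∧
    MapsSwap2 (⇑τ) {a, b, c, d} a b c d

/-- The annular crossing pattern (AC-2). -/
def AC2 (p q : ℕ) (τ : Equiv.Perm (Fin (p + q))) : Prop :=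
  ∃ a b c x y : Fin (p + q), List.Pairwise (· ≠ ·) [a, b, c, x, y] ∧
    x ∈ extSet p q ∧ y ∈ intSet p q ∧
    MapsCyc3 (⇑(lamPerm p q x y)) {a, b, c} a b c ∧
    MapsCyc3 (⇑τ) {a, b, c, x, y} a c b ∧
    MapsSwap (⇑τ) {a, b, c, x, y} x y

/-- The annular crossing pattern (AC-3). -/
def AC3 (p q : ℕ) (τ : Equiv.Perm (Fin (p + q))) : Prop :=
  ∃ a b c d x y : Fin (p + q), List.Pairwise (· ≠ ·) [a, b, c, d, x, y] ∧
    x ∈ extSet p q ∧ y ∈ intSet p q ∧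
    MapsCyc4 (⇑(lamPerm p q x y)) {a, b, c, d} a b c d ∧
    MapsSwap2 (⇑τ) {a, b, c, d, x, y} a b c d ∧
    MapsSwap (⇑τ) {a, b, c, d, x, y} x y

/-- The set `S_ann-nc(p,q)` of `(p,q)`-annular non-crossing permutations. -/
def AnnNC (p q : ℕ) (τ : Equiv.Perm (Fin (p + q))) : Prop :=
  AnnStandard p q τ ∧ ¬ AC1 p q τ ∧ ¬ AC2 p q τ ∧ ¬ AC3 p q τ

/-- A `(p,q)`-connecting set: meets both the external and internal points. -/
def ConnectingBlock (p q : ℕ) (B : Set (Fin (p + q))) : Prop :=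
  (B ∩ extSet p q).Nonempty ∧ (B ∩ intSet p q).Nonempty

/-- `τ` is `(p,q)`-connected: it has a `(p,q)`-connecting orbit. -/
def AnnConnected (p q : ℕ) (τ : Equiv.Perm (Fin (p + q))) : Prop :=
  ∃ A : Set (Fin (p + q)), IsOrbit τ A ∧ ConnectingBlock p q A

/-- A family of blocks has no crossing: no `a < b < c < d` with `a, c` in one block and
`b, d` in a different block. -/
def NoCrossing {n : ℕ} (ρ : Set (Set (Fin n))) : Prop :=
  ¬ ∃ (a b c d : Fin n) (B C : Set (Fin n)), B ∈ ρ ∧ C ∈ ρ ∧ B ≠ C ∧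
      a < b ∧ b < c ∧ c < d ∧ a ∈ B ∧ c ∈ B ∧ b ∈ C ∧ d ∈ C

section General
variable {α : Type*}

lemma coe_pow_iter (f : Equiv.Perm α) (k : ℕ) (x : α) : (f ^ k) x = f^[k] x := by
  rw [Equiv.Perm.iterate_eq_pow]

lemma sameCycle_iff_iter [Finite α] (f : Equiv.Perm α) (x y : α) :
    f.SameCycle x y ↔ ∃ k : ℕ, f^[k] x = y := by
  constructor
  · intro h
    obtain ⟨k, hk⟩ := h.exists_nat_pow_eq
    exact ⟨k, by rw [← coe_pow_iter]; exact hk⟩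
  · rintro ⟨k, hk⟩
    exact ⟨k, by rw [zpow_natCast, coe_pow_iter]; exact hk⟩

lemma inv_of_sameCycle [Finite α] (f : Equiv.Perm α) (P : α → Prop)
    (hP : ∀ z, P z → P (f z)) {x y : α} (h : f.SameCycle x y) (hx : P x) : P y := by
  obtain ⟨k, rfl⟩ := (sameCycle_iff_iter f x y).1 h
  clear h
  induction k with
  | zero => exact hx
  | succ k ih => rw [Function.iterate_succ_apply']; exact hP _ ih

lemma sc_apply (f : Equiv.Perm α) (x : α) : f.SameCycle x (f x) := ⟨1, by simp⟩

lemma numOrbits_eq (f : Equiv.Perm α) :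
    numOrbits f = Nat.card (Quotient (Equiv.Perm.SameCycle.setoid f)) := by
  unfold numOrbits
  rw [← Nat.card_coe_set_eq]
  symm
  refine Nat.card_congr (Equiv.ofBijective
    (fun c => ⟨Quotient.lift (s := Equiv.Perm.SameCycle.setoid f)
      (fun a => {b | f.SameCycle a b}) ?_ c, ?_⟩) ⟨?_, ?_⟩)
  · intro a b h
    ext c
    exact ⟨fun h' => (Equiv.Perm.SameCycle.symm h).trans h', fun h' => Equiv.Perm.SameCycle.trans h h'⟩
  · induction c using Quotient.inductionOn with
    | h a => exact ⟨a, rfl⟩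
  · intro c d
    induction c using Quotient.inductionOn with
    | h a =>
    induction d using Quotient.inductionOn with
    | h b =>
    intro h
    have h1 : {c | f.SameCycle a c} = {c | f.SameCycle b c} := congrArg Subtype.val h
    apply Quotient.sound
    have : b ∈ {c | f.SameCycle a c} := by rw [h1]; exact Equiv.Perm.SameCycle.refl f b
    exact this
  · rintro ⟨_, a, rfl⟩
    exact ⟨Quotient.mk _ a, rfl⟩

/-- a swap merging or splitting cycles -/
lemma sc_swap_of_not [Finite α] [DecidableEq α] (f : Equiv.Perm α) (a b : α)
    (h : ¬ f.SameCycle a b) : (Equiv.swap a b * f).SameCycle a b := by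
  by_contra hc
  set g := Equiv.swap a b * f with hg
  have key : ∀ y, g.SameCycle a y → (g.SameCycle a y ∧ f.SameCycle a y) := by
    intro y hy
    refine inv_of_sameCycle g (fun y => g.SameCycle a y ∧ f.SameCycle a y) ?_ hy
      ⟨Equiv.Perm.SameCycle.refl _ _, Equiv.Perm.SameCycle.refl _ _⟩
    rintro z ⟨h1, h2⟩
    have h3 := h1.trans (sc_apply g z)
    have h4 := h2.trans (sc_apply f z)
    refine ⟨h3, ?_⟩
    have : g z = Equiv.swap a b (f z) := rfl
    by_cases e1 : f z = a
    · rw [this, e1, Equiv.swap_apply_left] at h3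
      exact absurd h3 hc
    by_cases e2 : f z = b
    · rw [e2] at h4; exact absurd h4 h
    rw [this, Equiv.swap_apply_of_ne_of_ne e1 e2]
    exact h4
  have h5 : g.SameCycle a (g⁻¹ a) := ⟨-1, by simp⟩
  have h6 := (key _ h5).2.trans (sc_apply f _)
  have : g (g⁻¹ a) = Equiv.swap a b (f (g⁻¹ a)) := rfl
  rw [show g (g⁻¹ a) = a from g.apply_symm_apply a] at this
  have h7 : f (g⁻¹ a) = b := by
    have := congrArg (Equiv.swap a b) this
    rw [Equiv.swap_apply_self, Equiv.swap_apply_left] at this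
    exact this.symm
  rw [h7] at h6
  exact h h6

lemma not_sc_swap [Finite α] [DecidableEq α] (f : Equiv.Perm α) (a b : α) (hab : a ≠ b)
    (h : f.SameCycle a b) : ¬ (Equiv.swap a b * f).SameCycle a b := by
  classical
  have hex := (sameCycle_iff_iter f a b).1 h
  set k := Nat.find hex with hk
  have hkb : f^[k] a = b := Nat.find_spec hex
  have hmin : ∀ j < k, f^[j] a ≠ b := fun j hj => Nat.find_min hex hj
  intro hc
  have := inv_of_sameCycle _ (fun y => ∃ j < k, f^[j] a = y) ?_ hc ?_
  · obtain ⟨j, hj, e⟩ := this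
    exact hmin j hj e
  · rintro z ⟨j, hj, rfl⟩
    have e0 : (Equiv.swap a b * f) (f^[j] a) = Equiv.swap a b (f^[j+1] a) := by
      rw [Function.iterate_succ_apply']; rfl
    have hk0 : 0 < k := by omega
    rw [e0]
    by_cases e1 : j + 1 = k
    · rw [e1, hkb, Equiv.swap_apply_right]; exact ⟨0, hk0, rfl⟩
    have e2 : j + 1 < k := by omega
    have e3 := hmin _ e2
    by_cases e4 : f^[j+1] a = a
    · exfalso
      have : f^[k - (j+1)] a = b := by
        rw [← hkb]
        conv_rhs => rw [show k = (k - (j+1)) + (j+1) by omega, Function.iterate_add_apply, e4]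
      exact hmin _ (by omega) this
    · rw [Equiv.swap_apply_of_ne_of_ne e4 e3]
      exact ⟨_, e2, rfl⟩
  · refine ⟨0, ?_, rfl⟩
    rcases Nat.eq_zero_or_pos k with h0 | h0
    · rw [h0] at hkb; exact absurd hkb hab
    · exact h0

lemma numOrbits_swap_of_sc [Finite α] [DecidableEq α] (f : Equiv.Perm α) (a b : α) (hab : a ≠ b)
    (h : f.SameCycle a b) : numOrbits (Equiv.swap a b * f) = numOrbits f + 1 := by
  classical
  have hn := not_sc_swap f a b hab h
  set g := Equiv.swap a b * f with hg
  have hgz : ∀ z, g z = Equiv.swap a b (f z) := fun z => rfl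
  have hgf : ∀ x y, g.SameCycle x y → f.SameCycle x y := by
    intro x y hxy
    refine inv_of_sameCycle g (fun y => f.SameCycle x y) ?_ hxy (Equiv.Perm.SameCycle.refl _ _)
    intro z hz
    have hz' := hz.trans (sc_apply f z)
    rw [hgz]
    by_cases e1 : f z = a
    · rw [e1, Equiv.swap_apply_left]; rw [e1] at hz'; exact hz'.trans h
    by_cases e2 : f z = b
    · rw [e2, Equiv.swap_apply_right]; rw [e2] at hz'; exact hz'.trans h.symm
    rwa [Equiv.swap_apply_of_ne_of_ne e1 e2]
  let r : α → α := fun x => if g.SameCycle b x then a else x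
  have hra : ∀ x, f.SameCycle (r x) x := by
    intro x
    by_cases e : g.SameCycle b x
    · simp only [r, if_pos e]; exact h.trans (hgf _ _ e)
    · simp only [r, if_neg e]; exact Equiv.Perm.SameCycle.refl _ _
  have hrn : ∀ x, ¬ g.SameCycle (r x) b := by
    intro x
    by_cases e : g.SameCycle b x
    · simp only [r, if_pos e]; exact hn
    · simp only [r, if_neg e]; exact fun h => e h.symm
  have hstep : ∀ z, g.SameCycle (r z) (r (f z)) := by
    intro z
    have h0 := sc_apply g z
    rw [hgz] at h0
    by_cases e1 : f z = a
    · rw [e1, Equiv.swap_apply_left] at h0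
      have e2 : ¬ g.SameCycle b a := fun h => hn h.symm
      simp only [r, e1, if_neg e2, if_pos h0.symm]
      exact Equiv.Perm.SameCycle.refl _ _
    by_cases e2 : f z = b
    · rw [e2, Equiv.swap_apply_right] at h0
      have e3 : ¬ g.SameCycle b z := fun h => hn ((h.trans h0).symm)
      simp only [r, e2, if_neg e3, if_pos (Equiv.Perm.SameCycle.refl g b)]
      exact h0
    rw [Equiv.swap_apply_of_ne_of_ne e1 e2] at h0
    by_cases e3 : g.SameCycle b z
    · simp only [r, if_pos e3, if_pos (e3.trans h0)]
      exact Equiv.Perm.SameCycle.refl _ _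
    · have e4 : ¬ g.SameCycle b (f z) := fun h => e3 (h.trans h0.symm)
      simp only [r, if_neg e3, if_neg e4]
      exact h0
  have hr : ∀ x y, f.SameCycle x y → g.SameCycle (r x) (r y) := by
    intro x y hxy
    exact inv_of_sameCycle f (fun y => g.SameCycle (r x) (r y))
      (fun z hz => hz.trans (hstep z)) hxy (Equiv.Perm.SameCycle.refl _ _)
  rw [numOrbits_eq, numOrbits_eq]
  let F : Quotient (Equiv.Perm.SameCycle.setoid f) → Quotient (Equiv.Perm.SameCycle.setoid g) :=
    Quotient.lift (s := Equiv.Perm.SameCycle.setoid f) (fun x => Quotient.mk _ (r x))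
      (fun x y hxy => Quotient.sound (hr x y hxy))
  have hFinj : Function.Injective F := by
    intro c d
    induction c using Quotient.inductionOn with
    | h x =>
    induction d using Quotient.inductionOn with
    | h y =>
    intro hxy
    have h1 : g.SameCycle (r x) (r y) := Quotient.exact hxy
    exact Quotient.sound (((hra x).symm.trans (hgf _ _ h1)).trans (hra y))
  have hrange : Set.range F = {Quotient.mk _ b}ᶜ := by
    ext c
    induction c using Quotient.inductionOn with
    | h x =>
    constructor
    · rintro ⟨d, hd⟩ hx
      induction d using Quotient.inductionOn with
      | h y =>
      rw [Set.mem_singleton_iff] at hx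
      rw [hx] at hd
      have h1 : g.SameCycle (r y) b := Quotient.exact hd
      exact hrn y h1
    · intro hx
      refine ⟨Quotient.mk _ x, ?_⟩
      have e : ¬ g.SameCycle b x := fun h => hx (Quotient.sound h.symm)
      have : r x = x := if_neg e
      change Quotient.mk _ (r x) = _
      rw [this]
  have h1 : Nat.card (Set.range F) = Nat.card (Quotient (Equiv.Perm.SameCycle.setoid f)) :=
    Nat.card_congr (Equiv.ofInjective F hFinj).symm
  rw [← h1, Nat.card_coe_set_eq, hrange, Set.ncard_compl, Set.ncard_singleton]
  have : 0 < Nat.card (Quotient (Equiv.Perm.SameCycle.setoid g)) := by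
    have : Nonempty (Quotient (Equiv.Perm.SameCycle.setoid g)) := ⟨Quotient.mk _ b⟩
    exact Nat.card_pos
  omega

lemma numOrbits_swap_of_not_sc [Finite α] [DecidableEq α] (f : Equiv.Perm α) (a b : α)
    (h : ¬ f.SameCycle a b) : numOrbits (Equiv.swap a b * f) + 1 = numOrbits f := by
  have hab : a ≠ b := by rintro rfl; exact h (Equiv.Perm.SameCycle.refl _ _)
  have := numOrbits_swap_of_sc (Equiv.swap a b * f) a b hab (sc_swap_of_not f a b h)
  rw [← this, Equiv.swap_mul_self_mul]

lemma numOrbits_one [Finite α] : numOrbits (1 : Equiv.Perm α) = Nat.card α := by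
  rw [numOrbits_eq]
  symm
  refine Nat.card_congr (Equiv.ofBijective (fun x => Quotient.mk _ x) ⟨?_, ?_⟩)
  · intro x y h
    have : (1 : Equiv.Perm α).SameCycle x y := Quotient.exact h
    simpa using this
  · intro c
    exact Quotient.exists_rep c

/-- set-theoretic form of standard non-crossing -/
def SNC (τ γ : Equiv.Perm α) : Prop :=
  ∀ x, ∃ I : Set α, x ∉ I ∧ τ x ∉ I ∧ (∀ z, z ∈ I ↔ τ z ∈ I) ∧
    (∀ z, (γ z ∈ I ∨ γ z = τ x) ↔ (z ∈ I ∨ z = x))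

lemma SNC_sc [Finite α] {τ γ : Equiv.Perm α} (h : SNC τ γ) (x : α) : γ.SameCycle x (τ x) := by
  obtain ⟨I, h1, h2, h3, h4⟩ := h x
  by_contra hc
  have h5 : γ x ∈ I := by
    rcases (h4 x).2 (Or.inr rfl) with h | h
    · exact h
    · exact absurd (h ▸ sc_apply γ x) hc
  have h6 : γ.SameCycle (γ x) x := (sc_apply γ x).symm
  have := inv_of_sameCycle γ (fun y => γ.SameCycle x y ∧ y ∈ I) ?_ h6 ⟨sc_apply γ x, h5⟩
  · exact h1 this.2
  · rintro z ⟨hz, hzI⟩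
    have hz' := hz.trans (sc_apply γ z)
    refine ⟨hz', ?_⟩
    rcases (h4 z).2 (Or.inl hzI) with h | h
    · exact h
    · exact absurd (h ▸ hz') hc

lemma SNC_one (γ : Equiv.Perm α) : SNC 1 γ := by
  intro x
  refine ⟨{x}ᶜ, by simp, by simp, by simp, ?_⟩
  intro z
  simp [em']

lemma SNC_down [Finite α] [DecidableEq α] {τ γ : Equiv.Perm α} (h : SNC τ γ) (a : α) (ha : τ a ≠ a) :
    SNC (Equiv.swap a (τ a) * τ) (Equiv.swap a (τ a) * γ) := by
  classical
  obtain ⟨A, a1, a2, a3, a4⟩ := h a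
  obtain ⟨b, hb⟩ : ∃ b, b = τ a := ⟨_, rfl⟩
  rw [← hb] at a2 a4 ha ⊢
  have hτi : ∀ z w, τ z = τ w → z = w := fun z w h => τ.injective h
  have hγi : ∀ z w, γ z = γ w → z = w := fun z w h => γ.injective h
  intro x
  obtain ⟨I, i1, i2, i3, i4⟩ := h x
  simp only [Equiv.Perm.mul_apply, Equiv.swap_apply_def]
  by_cases hxa : x = a
  · subst hxa
    refine ⟨A, ?_, ?_, ?_, ?_⟩
    · grind
    · grind
    · intro z; have := hτi z x; have := a3 z; clear a3 a4 i3 i4 hτi hγi h; grind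
    · intro z; have := hγi z x; have := a4 z; clear a3 a4 i3 i4 hτi hγi h; grind
  by_cases hxA : x ∈ A
  · refine ⟨I ∩ (A ∪ {a}), ?_, ?_, ?_, ?_⟩
    · grind
    · grind
    · intro z; have := hτi z a; have := a3 z; have := i3 z; have := i3 a; clear a3 a4 i3 i4 hτi hγi h; grind
    · intro z; have := hγi z a; have := a4 z; have := i4 z; have := i4 a; have := i3 a
      have := a3 x; clear a3 a4 i3 i4 hτi hγi h; grind
  · refine ⟨I \ (A ∪ {a}), ?_, ?_, ?_, ?_⟩
    · grind
    · have := i3 a; clear a3 a4 i3 i4 hτi hγi h; grind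
    · intro z; have := hτi z a; have := a3 z; have := i3 z; have := i3 a; clear a3 a4 i3 i4 hτi hγi h; grind
    · intro z; have := hγi z a; have := a4 z; have := i4 z; have := i4 a; have := i3 a
      have := a3 x; have := hτi x a; clear a3 a4 i3 i4 hτi hγi h; grind

lemma SNC_up [Finite α] [DecidableEq α] {τ γ : Equiv.Perm α} (a : α) (ha : τ a ≠ a)
    (hac : γ.SameCycle a (τ a))
    (h : SNC (Equiv.swap a (τ a) * τ) (Equiv.swap a (τ a) * γ)) : SNC τ γ := by
  classical
  have hn := not_sc_swap γ a (τ a) ha.symm hac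
  obtain ⟨C, c1, c2, c3, c4⟩ : ∃ C : Set α, a ∈ C ∧ τ a ∉ C ∧
      (∀ z, z ∈ C ↔ (Equiv.swap a (τ a) * τ) z ∈ C) ∧
      (∀ z, z ∈ C ↔ (Equiv.swap a (τ a) * γ) z ∈ C) := by
    refine ⟨{y | (Equiv.swap a (τ a) * γ).SameCycle a y}, Equiv.Perm.SameCycle.refl _ _, hn, ?_, ?_⟩
    · intro z
      exact ⟨fun hz => hz.trans (SNC_sc h z), fun hz => hz.trans (SNC_sc h z).symm⟩
    · intro z
      exact ⟨fun hz => hz.trans (sc_apply _ z), fun hz => hz.trans (sc_apply _ z).symm⟩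
  obtain ⟨b, hb⟩ : ∃ b, b = τ a := ⟨_, rfl⟩
  rw [← hb] at c2 c3 c4 h ha
  have hτi : ∀ z w, τ z = τ w → z = w := fun z w h => τ.injective h
  have hγi : ∀ z w, γ z = γ w → z = w := fun z w h => γ.injective h
  intro x
  obtain ⟨I, i1, i2, i3, i4⟩ := h x
  simp only [Equiv.Perm.mul_apply, Equiv.swap_apply_def] at c3 c4 i1 i2 i3 i4
  by_cases hxa : x = a
  · subst hxa
    refine ⟨C \ {x}, ?_, ?_, ?_, ?_⟩
    · grind
    · grind
    · intro z; have := hτi z x; have := c3 z; clear c3 c4 i3 i4 hτi hγi h hac hn; grind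
    · intro z; have := hγi z x; have := c4 z; clear c3 c4 i3 i4 hτi hγi h hac hn; grind
  by_cases hxC : x ∈ C
  · by_cases haI : a ∈ I
    · refine ⟨(I ∩ C) ∪ Cᶜ, ?_, ?_, ?_, ?_⟩
      · grind
      · have := c3 x; have := hτi x a; clear c3 c4 i3 i4 hτi hγi h hac hn; grind
      · intro z; have := hτi z a; have := c3 z; have := i3 z; clear c3 c4 i3 i4 hτi hγi h hac hn; grind
      · intro z; have := c4 z; have := i4 z; have := c3 x; have := hτi x a; clear c3 c4 i3 i4 hτi hγi h hac hn; grind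
    · refine ⟨I ∩ C, ?_, ?_, ?_, ?_⟩
      · grind
      · have := c3 x; have := hτi x a; clear c3 c4 i3 i4 hτi hγi h hac hn; grind
      · intro z; have := hτi z a; have := c3 z; have := i3 z; clear c3 c4 i3 i4 hτi hγi h hac hn; grind
      · intro z; have := c4 z; have := i4 z; have := c3 x; have := hτi x a; clear c3 c4 i3 i4 hτi hγi h hac hn; grind
  · by_cases hbI : b ∈ I
    · refine ⟨I ∪ C, ?_, ?_, ?_, ?_⟩
      · grind
      · have := c3 x; have := hτi x a; clear c3 c4 i3 i4 hτi hγi h hac hn; grind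
      · intro z; have := hτi z a; have := c3 z; have := i3 z; clear c3 c4 i3 i4 hτi hγi h hac hn; grind
      · intro z; have := c4 z; have := i4 z; have := c3 x; have := hτi x a; clear c3 c4 i3 i4 hτi hγi h hac hn; grind
    · refine ⟨I \ C, ?_, ?_, ?_, ?_⟩
      · grind
      · have := c3 x; have := hτi x a; clear c3 c4 i3 i4 hτi hγi h hac hn; grind
      · intro z; have := hτi z a; have := c3 z; have := i3 z; clear c3 c4 i3 i4 hτi hγi h hac hn; grind
      · intro z; have := c4 z; have := i4 z; have := c3 x; have := hτi x a; clear c3 c4 i3 i4 hτi hγi h hac hn; grind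

lemma main_gen [Finite α] (n : ℕ) : ∀ (τ γ : Equiv.Perm α), Nat.card α ≤ numOrbits τ + n →
    numOrbits τ + numOrbits (τ⁻¹ * γ) ≤ Nat.card α + numOrbits γ ∧
    (SNC τ γ ↔ numOrbits τ + numOrbits (τ⁻¹ * γ) = Nat.card α + numOrbits γ) := by
  classical
  have base : ∀ (γ : Equiv.Perm α), 
    numOrbits (1 : Equiv.Perm α) + numOrbits ((1 : Equiv.Perm α)⁻¹ * γ) ≤ Nat.card α + numOrbits γ ∧
    (SNC 1 γ ↔ numOrbits (1 : Equiv.Perm α) + numOrbits ((1 : Equiv.Perm α)⁻¹ * γ)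
      = Nat.card α + numOrbits γ) := by
    intro γ
    rw [numOrbits_one, inv_one, one_mul]
    exact ⟨le_rfl, fun _ => rfl, fun _ => SNC_one γ⟩
  have hle : ∀ (f : Equiv.Perm α), numOrbits f ≤ Nat.card α := by
    intro f
    rw [numOrbits_eq]
    exact Nat.card_le_card_of_surjective _ (Quotient.mk_surjective)
  induction n with
  | zero =>
    intro τ γ h
    by_cases h1 : τ = 1
    · subst h1; exact base γ
    exfalso
    obtain ⟨a, ha⟩ : ∃ a, τ a ≠ a := by
      by_contra hc; push Not at hc; exact h1 (Equiv.ext hc)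
    have := numOrbits_swap_of_sc τ a (τ a) ha.symm (sc_apply τ a)
    have := hle (Equiv.swap a (τ a) * τ)
    omega
  | succ n ih =>
    intro τ γ h
    by_cases h1 : τ = 1
    · subst h1; exact base γ
    obtain ⟨a, ha⟩ : ∃ a, τ a ≠ a := by
      by_contra hc; push Not at hc; exact h1 (Equiv.ext hc)
    have h2 := numOrbits_swap_of_sc τ a (τ a) ha.symm (sc_apply τ a)
    obtain ⟨h3, h4⟩ := ih (Equiv.swap a (τ a) * τ) (Equiv.swap a (τ a) * γ) (by omega)
    have h5 : (Equiv.swap a (τ a) * τ)⁻¹ * (Equiv.swap a (τ a) * γ) = τ⁻¹ * γ := by group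
    rw [h5] at h3 h4
    by_cases hc : γ.SameCycle a (τ a)
    · have h6 := numOrbits_swap_of_sc γ a (τ a) ha.symm hc
      refine ⟨by omega, ?_⟩
      have h7 : SNC τ γ ↔ SNC (Equiv.swap a (τ a) * τ) (Equiv.swap a (τ a) * γ) :=
        ⟨fun h => SNC_down h a ha, fun h => SNC_up a ha hc h⟩
      rw [h7, h4]
      omega
    · have h6 := numOrbits_swap_of_not_sc γ a (τ a) hc
      refine ⟨by omega, fun h => absurd (SNC_sc h a) hc, fun h => ?_⟩
      omega
end General

section Bridge
variable {α : Type*}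

lemma induced_eq {f : α → α} {B : Set α} {b c : α} (m : ℕ) (hm : 0 < m) (hc : f^[m] b = c)
    (hB : c ∈ B) (hmin : ∀ i, 0 < i → i < m → f^[i] b ∉ B) : induced f B b = c := by
  classical
  have h : ∃ k, 0 < k ∧ f^[k] b ∈ B := ⟨m, hm, by rw [hc]; exact hB⟩
  have hfind : Nat.find h = m := by
    rw [Nat.find_eq_iff]
    refine ⟨⟨hm, by rw [hc]; exact hB⟩, ?_⟩
    rintro n hn ⟨h1, h2⟩
    exact hmin n h1 hn h2
  unfold induced
  rw [dif_pos h]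
  have h2 : f^[Nat.find h] b = c := by rw [hfind]; exact hc
  convert h2

lemma induced_spec [Finite α] (f : Equiv.Perm α) (B : Set α) (b : α) (hb : b ∈ B) :
    ∃ m, 0 < m ∧ f^[m] b = induced f B b ∧ induced f B b ∈ B ∧
      ∀ i, 0 < i → i < m → f^[i] b ∉ B := by
  classical
  have h : ∃ k, 0 < k ∧ f^[k] b ∈ B := by
    refine ⟨orderOf f, orderOf_pos f, ?_⟩
    rw [← coe_pow_iter, pow_orderOf_eq_one]
    exact hb
  have e : induced f B b = f^[Nat.find h] b :=
    induced_eq _ (Nat.find_spec h).1 rfl (Nat.find_spec h).2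
      (fun i h0 hi hB => Nat.find_min h hi ⟨h0, hB⟩)
  rw [e]
  exact ⟨_, (Nat.find_spec h).1, rfl, (Nat.find_spec h).2,
    fun i h0 hi hB => Nat.find_min h hi ⟨h0, hB⟩⟩

lemma induced_sc [Finite α] (f : Equiv.Perm α) (B : Set α) (b : α) (hb : b ∈ B) :
    f.SameCycle b (induced f B b) := by
  obtain ⟨m, -, h, -⟩ := induced_spec f B b hb
  exact (sameCycle_iff_iter f _ _).2 ⟨m, h⟩

lemma induced_closed [Finite α] (f : Equiv.Perm α) (S T : Set α) (hTS : T ⊆ S)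
    (hT : ∀ z ∈ T, induced f S z ∈ T) {x y : α} (hx : x ∈ T) (hy : y ∈ S)
    (h : f.SameCycle x y) : y ∈ T := by
  obtain ⟨k, hk⟩ := (sameCycle_iff_iter f x y).1 h
  clear h
  induction k using Nat.strong_induction_on generalizing x with
  | _ k ih =>
    rcases Nat.eq_zero_or_pos k with h0 | h0
    · subst h0; exact (show x = y from hk) ▸ hx
    obtain ⟨m, hm, h1, h2, h3⟩ := induced_spec f S x (hTS hx)
    have hmk : m ≤ k := by
      by_contra hc
      exact h3 k h0 (by omega) (hk ▸ hy)
    refine ih (k - m) (by omega) (hT x hx) ?_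
    rw [← h1, ← Function.iterate_add_apply, show k - m + m = k by omega, hk]

def StdRel (τ γ : Equiv.Perm α) : Prop :=
  ∀ x, τ x = induced γ {b | τ.SameCycle x b} x

def CrossGen (τ γ : Equiv.Perm α) : Prop :=
  ∃ a b c d : α, List.Pairwise (· ≠ ·) [a, b, c, d] ∧
    MapsCyc4 (⇑γ) {a, b, c, d} a b c d ∧
    MapsSwap2 (⇑τ) {a, b, c, d} a b c d

lemma std_of_SNC [Finite α] {τ γ : Equiv.Perm α} (h : SNC τ γ) : StdRel τ γ := by
  intro x
  obtain ⟨I, h1, h2, h3, h4⟩ := h x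
  obtain ⟨m, hm, e1, e2, e3⟩ := induced_spec γ {b | τ.SameCycle x b} x (Equiv.Perm.SameCycle.refl _ _)
  have hnot : ∀ y, τ.SameCycle x y → y ∉ I := fun y hy =>
    inv_of_sameCycle τ (fun y => y ∉ I) (fun z hz hz' => hz ((h3 z).2 hz')) hy h1
  have key : ∀ j, j < m → (γ^[j] x ∈ I ∨ γ^[j] x = x) := by
    intro j
    induction j with
    | zero => intro _; right; rfl
    | succ j ih =>
      intro hj
      have := (h4 _).2 (ih (by omega))
      rw [← Function.iterate_succ_apply' γ] at this
      rcases this with h | h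
      · exact Or.inl h
      · exfalso
        apply e3 (j+1) (by omega) hj
        change τ.SameCycle _ _
        rw [h]; exact sc_apply τ x
  have := (h4 _).2 (key (m-1) (by omega))
  rw [← Function.iterate_succ_apply' γ, show (m-1).succ = m by omega, e1] at this
  rcases this with h | h
  · exact absurd h (hnot _ e2)
  · exact h.symm

/-- leaving an interval -/
lemma leave (γ : Equiv.Perm α) (I : Set α) (x w : α)
    (h4 : ∀ z, (γ z ∈ I ∨ γ z = w) ↔ (z ∈ I ∨ z = x)) (m : ℕ) (b : α) (hb : b ∈ I)
    (hm : γ^[m] b ∉ I) : ∃ i, 0 < i ∧ i ≤ m ∧ γ^[i] b = w := by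
  by_contra hc
  push Not at hc
  have key : ∀ j ≤ m, γ^[j] b ∈ I := by
    intro j
    induction j with
    | zero => intro _; exact hb
    | succ j ih =>
      intro hj
      have := (h4 _).2 (Or.inl (ih (by omega)))
      rw [← Function.iterate_succ_apply' γ] at this
      rcases this with h | h
      · exact h
      · exact absurd h (hc _ (by omega) hj)
  exact hm (key m le_rfl)

lemma iter_cancel (γ : Equiv.Perm α) {i j : ℕ} {u v : α} (hij : i ≤ j)
    (h : γ^[i] u = γ^[j] v) : u = γ^[j - i] v := by
  have : γ^[i] u = γ^[i] (γ^[j-i] v) := by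
    rw [← Function.iterate_add_apply, show i + (j - i) = j by omega, h]
  exact (γ.injective.iterate i) this

lemma not_cross_of_SNC [Finite α] {τ γ : Equiv.Perm α} (h : SNC τ γ) : ¬ CrossGen τ γ := by
  rintro ⟨a, b, c, d, hne, ⟨g1, g2, g3, g4⟩, t1, t2, t3, t4⟩
  simp only [List.pairwise_cons, List.mem_cons, List.not_mem_nil, or_false, forall_eq_or_imp,
    forall_eq] at hne
  obtain ⟨⟨hab, hac, had⟩, ⟨hbc, hbd⟩, hcd, -⟩ := hne
  set S : Set α := {a, b, c, d} with hS
  have Sa : a ∈ S := by simp [hS]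
  have Sb : b ∈ S := by simp [hS]
  have Sc : c ∈ S := by simp [hS]
  have Sd : d ∈ S := by simp [hS]
  have tac : τ.SameCycle a c := t1 ▸ induced_sc τ S a Sa
  have tbd : τ.SameCycle b d := t3 ▸ induced_sc τ S b Sb
  have gab : γ.SameCycle a b := g1 ▸ induced_sc γ S a Sa
  have tab : ¬ τ.SameCycle a b := by
    intro hc
    have : b ∈ ({a, c} : Set α) := induced_closed τ S {a, c} (by
        rintro z (rfl | rfl) <;> assumption) (by
        rintro z (rfl | rfl)
        · rw [t1]; simp
        · rw [t2]; simp) (by simp) Sb hc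
    rcases this with h | h
    · exact hab h.symm
    · exact hbc h
  have hx := inv_of_sameCycle γ (fun y => ∃ x, τ.SameCycle a x ∧ ∃ I : Set α, (x ∉ I ∧ τ x ∉ I ∧ (∀ z, z ∈ I ↔ τ z ∈ I) ∧
    (∀ z, (γ z ∈ I ∨ γ z = τ x) ↔ (z ∈ I ∨ z = x))) ∧ (y ∈ I ∨ y = x)) ?_ gab ?_
  · obtain ⟨x, hax, I, ⟨h1, h2, h3, h4⟩, h5⟩ := hx
    have bI : b ∈ I := by
      rcases h5 with h | h
      · exact h
      · exact absurd (h ▸ hax) tab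
    have hnot : ∀ y, τ.SameCycle x y → y ∉ I := fun y hy =>
      inv_of_sameCycle τ (fun y => y ∉ I) (fun z hz hz' => hz ((h3 z).2 hz')) hy h1
    have dI : d ∈ I := inv_of_sameCycle τ (fun y => y ∈ I) (fun z hz => (h3 z).1 hz) tbd bI
    have aI : a ∉ I := hnot _ hax.symm
    have cI : c ∉ I := hnot _ (hax.symm.trans tac)
    obtain ⟨m1, p1, q1, -, r1⟩ := induced_spec γ S b Sb
    obtain ⟨m2, p2, q2, -, r2⟩ := induced_spec γ S d Sd
    rw [g2] at q1
    rw [g4] at q2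
    obtain ⟨i, i0, i1, i2⟩ := leave γ I x (τ x) h4 m1 b bI (q1 ▸ cI)
    obtain ⟨j, j0, j1, j2⟩ := leave γ I x (τ x) h4 m2 d dI (q2 ▸ aI)
    rcases le_total i j with hij | hij
    · have := iter_cancel γ hij (i2.trans j2.symm)
      rcases Nat.eq_zero_or_pos (j - i) with h0 | h0
      · rw [h0] at this; exact hbd this
      · exact r2 (j - i) h0 (by omega) (this ▸ Sb)
    · have := iter_cancel γ hij (j2.trans i2.symm)
      rcases Nat.eq_zero_or_pos (i - j) with h0 | h0
      · rw [h0] at this; exact hbd this.symm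
      · exact r1 (i - j) h0 (by omega) (this ▸ Sd)
  · rintro z ⟨x, hax, I, hI, hz⟩
    rcases (hI.2.2.2 z).2 hz with h' | h'
    · exact ⟨x, hax, I, hI, Or.inl h'⟩
    · obtain ⟨J, hJ⟩ := h (τ x)
      exact ⟨τ x, hax.trans (sc_apply τ x), J, hJ, Or.inr h'⟩
  · obtain ⟨J, hJ⟩ := h a
    exact ⟨a, Equiv.Perm.SameCycle.refl _ _, J, hJ, Or.inr rfl⟩

lemma induced_back [Finite α] (τ : Equiv.Perm α) (S : Set α) (u : α) (hu : τ u ≠ u) (huS : u ∈ S)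
    (huS' : τ u ∈ S) (h : ∀ y ∈ S, τ.SameCycle u y → y = u ∨ y = τ u) :
    induced τ S (τ u) = u := by
  obtain ⟨m, h0, h1, h2, h3⟩ := induced_spec τ S (τ u) huS'
  rcases h _ h2 ((sc_apply τ u).trans (induced_sc τ S _ huS')) with e | e
  · exact e
  · exfalso
    rw [e] at h1
    have h4 : τ^[m - 1] (τ u) = u := by
      apply τ.injective
      rw [← Function.iterate_succ_apply' τ, show (m-1).succ = m by omega, h1]
    rcases Nat.eq_zero_or_pos (m - 1) with h5 | h5
    · rw [h5] at h4; exact hu h4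
    · exact h3 (m-1) h5 (by omega) (h4.symm ▸ huS)

lemma SNC_of_std [Finite α] {τ γ : Equiv.Perm α} (h : StdRel τ γ) (hcr : ¬ CrossGen τ γ) :
    SNC τ γ := by
  classical
  have hsc : ∀ z, γ.SameCycle z (τ z) := by
    intro z
    rw [h z]
    exact induced_sc γ _ _ (Equiv.Perm.SameCycle.refl _ _)
  intro x
  obtain ⟨k, k0, k1, k2, k3⟩ := induced_spec γ {b | τ.SameCycle x b} x (Equiv.Perm.SameCycle.refl _ _)
  rw [← h x] at k1 k2
  have hI : ∀ z, (∃ j, 0 < j ∧ j < k ∧ γ^[j] x = z) → ¬ τ.SameCycle x z := by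
    rintro z ⟨j, j0, j1, rfl⟩
    exact k3 j j0 j1
  set N := Function.minimalPeriod γ x with hN
  have hper : x ∈ Function.periodicPts γ := by
    refine ⟨orderOf γ, orderOf_pos γ, ?_⟩
    change γ^[orderOf γ] x = x
    rw [← coe_pow_iter, pow_orderOf_eq_one]; rfl
  have hN0 : 0 < N := Function.minimalPeriod_pos_of_mem_periodicPts hper
  have hNx : γ^[N] x = x := Function.iterate_minimalPeriod
  have hinj : ∀ i j, i < N → j < N → γ^[i] x = γ^[j] x → i = j := by
    intro i j hi hj hij
    exact Function.iterate_injOn_Iio_minimalPeriod hi hj hij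
  have hkN : k ≤ N := by
    by_contra hc
    exact k3 N hN0 (by omega) (by rw [hNx]; exact Equiv.Perm.SameCycle.refl _ _)
  have hmap : ∀ z, (∃ j, 0 < j ∧ j < k ∧ γ^[j] x = z) → (∃ j, 0 < j ∧ j < k ∧ γ^[j] x = τ z) := by
    intro z hz
    have hxz := hI z hz
    obtain ⟨j, j0, j1, rfl⟩ := hz
    by_contra hcon
    obtain ⟨l, lN, hl⟩ : ∃ l, l < N ∧ γ^[l] x = τ (γ^[j] x) := by
      have : γ.SameCycle x (τ (γ^[j] x)) :=
        ((sameCycle_iff_iter γ _ _).2 ⟨j, rfl⟩).trans (hsc _)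
      obtain ⟨l, hl⟩ := (sameCycle_iff_iter γ _ _).1 this
      refine ⟨l % N, Nat.mod_lt _ hN0, ?_⟩
      rw [← hl]
      exact Function.iterate_mod_minimalPeriod_eq
    have hxl : ¬ τ.SameCycle x (γ^[l] x) := by
      rw [hl]
      exact fun h => hxz (h.trans (sc_apply τ _).symm)
    have l0 : l ≠ 0 := by
      rintro rfl; exact hxl (Equiv.Perm.SameCycle.refl _ _)
    have lk : l ≠ k := by
      rintro rfl; rw [k1] at hxl; exact hxl (sc_apply τ x)
    have lk' : k < l := by
      by_contra hc
      exact hcon ⟨l, by omega, by omega, hl⟩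
    have hmem : ∀ i, i < N → γ^[i] x ∈ ({x, γ^[j] x, τ x, τ (γ^[j] x)} : Set α) →
        i = 0 ∨ i = j ∨ i = k ∨ i = l := by
      rintro i hi (h | h | h | h)
      · exact Or.inl (hinj i 0 hi hN0 h)
      · exact Or.inr (Or.inl (hinj i j hi (by omega) h))
      · rw [← k1] at h
        exact Or.inr (Or.inr (Or.inl (hinj i k hi (by omega) h)))
      · rw [← hl] at h
        exact Or.inr (Or.inr (Or.inr (hinj i l hi (by omega) h)))
    have arc : ∀ u v, u < v → v ≤ N → (∀ i, u < i → i < v → ¬ (i = 0 ∨ i = j ∨ i = k ∨ i = l)) →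
        γ^[v] x ∈ ({x, γ^[j] x, τ x, τ (γ^[j] x)} : Set α) →
        induced γ ({x, γ^[j] x, τ x, τ (γ^[j] x)} : Set α) (γ^[u] x) = γ^[v] x := by
      intro u v huv hv hi hvS
      refine induced_eq (v - u) (by omega) ?_ hvS ?_
      · rw [← Function.iterate_add_apply, show v - u + u = v by omega]
      · intro i i0 i1 hS
        rw [← Function.iterate_add_apply] at hS
        exact hi (i + u) (by omega) (by omega) (hmem _ (by omega) hS)
    have hxτ : τ x ≠ x := by
      rw [← k1]
      intro h
      have := hinj k 0 (by omega) hN0 h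
      omega
    have hzτ : τ (γ^[j] x) ≠ γ^[j] x := by
      intro h
      exact hcon ⟨j, j0, j1, h.symm⟩
    apply hcr
    refine ⟨x, γ^[j] x, τ x, τ (γ^[j] x), ?_, ⟨?_, ?_, ?_, ?_⟩, ?_, ?_, ?_, ?_⟩
    · simp only [List.pairwise_cons, List.mem_cons, List.not_mem_nil, or_false, forall_eq_or_imp,
        forall_eq]
      have n1 : x ≠ γ^[j] x := fun h => hxz (h ▸ Equiv.Perm.SameCycle.refl _ _)
      have n2 : x ≠ τ (γ^[j] x) := fun h => hxl (hl ▸ h ▸ Equiv.Perm.SameCycle.refl _ _)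
      have n3 : γ^[j] x ≠ τ x := fun h => hxz (h ▸ sc_apply τ x)
      have n4 : τ x ≠ τ (γ^[j] x) := fun h => n1 (τ.injective h)
      exact ⟨⟨n1, hxτ.symm, n2⟩, ⟨n3, hzτ.symm⟩, n4, by simp⟩
    · exact arc 0 j j0 (by omega) (by omega) (by simp)
    · have := arc j k j1 (by omega) (by omega) (by rw [k1]; simp)
      rwa [k1] at this
    · have := arc k l lk' (by omega) (by omega) (by rw [hl]; simp)
      rwa [k1, hl] at this
    · have := arc l N lN le_rfl (by omega) (by rw [hNx]; simp)
      rwa [hl, hNx] at this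
    · exact induced_eq 1 one_pos rfl (by simp) (by omega)
    · apply induced_back τ _ x hxτ (by simp) (by simp)
      rintro y (rfl | rfl | rfl | rfl) hy
      · simp
      · exact absurd hy hxz
      · simp
      · exact absurd (hl ▸ hy) hxl
    · exact induced_eq 1 one_pos rfl (by simp) (by omega)
    · apply induced_back τ _ _ hzτ (by simp) (by simp)
      intro y hyS hy
      rcases hyS with e | e | e | e
      · rw [e] at hy; exact absurd hy.symm hxz
      · exact Or.inl e
      · rw [e] at hy; exact absurd ((sc_apply τ x).trans hy.symm) hxz
      · exact Or.inr e
  refine ⟨{z | ∃ j, 0 < j ∧ j < k ∧ γ^[j] x = z}, ?_, ?_, ?_, ?_⟩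
  · intro hx
    exact hI x hx (Equiv.Perm.SameCycle.refl _ _)
  · intro hx
    exact hI _ hx (sc_apply τ x)
  · intro z
    refine ⟨hmap z, fun hz => ?_⟩
    exact inv_of_sameCycle τ (fun z => ∃ j, 0 < j ∧ j < k ∧ γ^[j] x = z) hmap (sc_apply τ z).symm hz
  · intro z
    constructor
    · intro hz
      obtain ⟨j, j0, j1, hj⟩ : ∃ j, 0 < j ∧ j ≤ k ∧ γ^[j] x = γ z := by
        rcases hz with ⟨j, j0, j1, hj⟩ | hz
        · exact ⟨j, j0, j1.le, hj⟩
        · exact ⟨k, k0, le_rfl, k1.trans hz.symm⟩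
      have hj' : γ^[j-1] x = z := by
        apply γ.injective
        rw [← Function.iterate_succ_apply' γ, show (j-1).succ = j by omega, hj]
      rcases Nat.eq_zero_or_pos (j - 1) with h5 | h5
      · right; rw [h5] at hj'; exact hj'.symm
      · exact Or.inl ⟨j - 1, h5, by omega, hj'⟩
    · intro hz
      obtain ⟨j, j1, rfl⟩ : ∃ j, j < k ∧ γ^[j] x = z := by
        rcases hz with ⟨j, j0, j1, hj⟩ | hz
        · exact ⟨j, j1, hj⟩
        · exact ⟨0, k0, hz.symm⟩
      rw [← Function.iterate_succ_apply' γ j x]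
      by_cases e : j + 1 = k
      · right; rw [Nat.succ_eq_add_one, e, k1]
      · exact Or.inl ⟨j + 1, by omega, by omega, rfl⟩

lemma SNC_iff [Finite α] (τ γ : Equiv.Perm α) : SNC τ γ ↔ StdRel τ γ ∧ ¬ CrossGen τ γ :=
  ⟨fun h => ⟨std_of_SNC h, not_cross_of_SNC h⟩, fun h => SNC_of_std h.1 h.2⟩
end Bridge

section Annular
variable {p q : ℕ}

lemma gammaExt_ext (hp : 0 < p) (i : Fin (p + q)) (hi : (i : ℕ) < p) :
    ((gammaExt p q i : Fin (p + q)) : ℕ) = (i + 1) % p := by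
  have hnd : ((List.finRange (p + q)).take p).Nodup :=
    (List.nodup_finRange _).sublist (List.take_sublist _ _)
  have hlen : ((List.finRange (p + q)).take p).length = p := by simp
  have := List.formPerm_apply_getElem _ hnd (i : ℕ) (by rw [hlen]; exact hi)
  have e : ((List.finRange (p + q)).take p)[(i : ℕ)]'(by rw [hlen]; exact hi) = i := by simp
  rw [e] at this
  unfold gammaExt
  rw [this]
  simp

lemma gammaExt_int (i : Fin (p + q)) (hi : p ≤ (i : ℕ)) : gammaExt p q i = i := by
  apply List.formPerm_apply_of_notMem
  intro h
  rw [List.mem_take_iff_getElem] at h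
  obtain ⟨j, hj, e⟩ := h
  simp at e
  have := congrArg Fin.val e
  simp at this
  omega

lemma gammaInt_int (hq : 0 < q) (i : Fin (p + q)) (hi : p ≤ (i : ℕ)) :
    ((gammaInt p q i : Fin (p + q)) : ℕ) = p + (i - p + 1) % q := by
  have hnd : ((List.finRange (p + q)).drop p).Nodup :=
    (List.nodup_finRange _).sublist (List.drop_sublist _ _)
  have hlen : ((List.finRange (p + q)).drop p).length = q := by simp
  have hi' : (i : ℕ) - p < ((List.finRange (p + q)).drop p).length := by
    rw [hlen]; have := i.2; omega
  have := List.formPerm_apply_getElem _ hnd ((i : ℕ) - p) hi'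
  have e : ((List.finRange (p + q)).drop p)[(i : ℕ) - p]'hi' = i := by
    simp only [List.getElem_drop, List.getElem_finRange]
    ext
    simp
    omega
  rw [e] at this
  unfold gammaInt
  rw [this]
  simp

lemma gammaInt_ext (i : Fin (p + q)) (hi : (i : ℕ) < p) : gammaInt p q i = i := by
  apply List.formPerm_apply_of_notMem
  intro h
  rw [List.mem_drop_iff_getElem] at h
  obtain ⟨j, hj, e⟩ := h
  have := congrArg Fin.val e
  simp at this
  omega

lemma gammaAnn_ext (i : Fin (p + q)) (hi : (i : ℕ) < p) : gammaAnn p q i = gammaExt p q i := by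
  unfold gammaAnn
  rw [Equiv.Perm.mul_apply, gammaInt_ext i hi]

lemma gammaAnn_int (i : Fin (p + q)) (hi : p ≤ (i : ℕ)) : gammaAnn p q i = gammaInt p q i := by
  have hq : 0 < q := by have := i.2; omega
  unfold gammaAnn
  rw [Equiv.Perm.mul_apply]
  apply gammaExt_int
  rw [gammaInt_int hq i hi]
  omega

lemma iter_ext (i : Fin (p + q)) (hi : (i : ℕ) < p) (k : ℕ) :
    (gammaAnn p q)^[k] i = (gammaExt p q)^[k] i ∧ (((gammaExt p q)^[k] i : Fin (p + q)) : ℕ) < p := by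
  induction k with
  | zero => exact ⟨rfl, hi⟩
  | succ k ih =>
    rw [Function.iterate_succ_apply', Function.iterate_succ_apply', ih.1, gammaAnn_ext _ ih.2,
      gammaExt_ext (by omega) _ ih.2]
    exact ⟨rfl, Nat.mod_lt _ (by omega)⟩

lemma iter_int (i : Fin (p + q)) (hi : p ≤ (i : ℕ)) (k : ℕ) :
    (gammaAnn p q)^[k] i = (gammaInt p q)^[k] i ∧ p ≤ (((gammaInt p q)^[k] i : Fin (p + q)) : ℕ) := by
  have hq : 0 < q := by have := i.2; omega
  induction k with
  | zero => exact ⟨rfl, hi⟩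
  | succ k ih =>
    rw [Function.iterate_succ_apply', Function.iterate_succ_apply', ih.1, gammaAnn_int _ ih.2,
      gammaInt_int hq _ ih.2]
    exact ⟨rfl, by omega⟩

lemma induced_congr {α : Type*} {f g : α → α} {B : Set α} {b : α}
    (h : ∀ k, f^[k] b = g^[k] b) : induced f B b = induced g B b := by
  classical
  by_cases hex : ∃ k, 0 < k ∧ f^[k] b ∈ B
  · have hs := Nat.find_spec hex
    have hmin : ∀ i, 0 < i → i < Nat.find hex → f^[i] b ∉ B :=
      fun i h0 hi hB => Nat.find_min hex hi ⟨h0, hB⟩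
    rw [induced_eq (Nat.find hex) hs.1 rfl hs.2 hmin,
      induced_eq (f := g) (Nat.find hex) hs.1 (h _).symm hs.2
        (fun i h0 hi => by rw [← h i]; exact hmin i h0 hi)]
  · have hex' : ¬ ∃ k, 0 < k ∧ g^[k] b ∈ B := by
      simpa only [h] using hex
    unfold induced
    rw [dif_neg hex, dif_neg hex']

lemma sc_ext (hp : 0 < p) (k : ℕ) (hk : k < p) :
    (gammaAnn p q).SameCycle ⟨0, by omega⟩ ⟨k, by omega⟩ := by
  induction k with
  | zero => exact Equiv.Perm.SameCycle.refl _ _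
  | succ k ih =>
    refine (ih (by omega)).trans ?_
    have : gammaAnn p q ⟨k, by omega⟩ = ⟨k + 1, by omega⟩ := by
      rw [gammaAnn_ext _ (by simp; omega)]
      ext
      rw [gammaExt_ext hp _ (by simp; omega)]
      exact Nat.mod_eq_of_lt hk
    rw [← this]
    exact sc_apply _ _

lemma sc_int (hq : 0 < q) (k : ℕ) (hk : k < q) :
    (gammaAnn p q).SameCycle ⟨p, by omega⟩ ⟨p + k, by omega⟩ := by
  induction k with
  | zero => exact Equiv.Perm.SameCycle.refl _ _
  | succ k ih =>
    refine (ih (by omega)).trans ?_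
    have : gammaAnn p q ⟨p + k, by omega⟩ = ⟨p + (k + 1), by omega⟩ := by
      rw [gammaAnn_int _ (by simp)]
      ext
      rw [gammaInt_int hq _ (by simp)]
      simp only [Nat.add_sub_cancel_left]
      rw [Nat.mod_eq_of_lt hk]
    rw [← this]
    exact sc_apply _ _

lemma sc_ext' (i j : Fin (p + q)) (hi : (i : ℕ) < p) (h : (gammaAnn p q).SameCycle i j) :
    (j : ℕ) < p := by
  obtain ⟨k, rfl⟩ := (sameCycle_iff_iter _ _ _).1 h
  rw [(iter_ext i hi k).1]
  exact (iter_ext i hi k).2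

lemma numOrbits_gammaAnn (hp : 0 < p) (hq : 0 < q) : numOrbits (gammaAnn p q) = 2 := by
  unfold numOrbits
  have e : {A : Set (Fin (p + q)) | IsOrbit (gammaAnn p q) A} =
      {{b | (gammaAnn p q).SameCycle ⟨0, by omega⟩ b}, {b | (gammaAnn p q).SameCycle ⟨p, by omega⟩ b}} := by
    ext A
    constructor
    · rintro ⟨a, rfl⟩
      by_cases ha : (a : ℕ) < p
      · left
        have h := sc_ext (q := q) hp a ha
        ext b
        exact ⟨fun h' => h.trans h', fun h' => h.symm.trans h'⟩
      · right
        have h := sc_int (p := p) hq (a - p) (by have := a.2; omega)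
        have ea : (⟨p + (a - p), by have := a.2; omega⟩ : Fin (p + q)) = a := by ext; simp; omega
        rw [ea] at h
        rw [Set.mem_singleton_iff]
        ext b
        exact ⟨fun h' => h.trans h', fun h' => h.symm.trans h'⟩
    · rintro (rfl | rfl)
      · exact ⟨_, rfl⟩
      · exact ⟨_, rfl⟩
  rw [e]
  apply Set.ncard_pair
  intro h
  have h1 : (⟨p, by omega⟩ : Fin (p + q)) ∈ {b | (gammaAnn p q).SameCycle ⟨0, by omega⟩ b} := by
    rw [h]; exact Equiv.Perm.SameCycle.refl _ _
  have := sc_ext' _ _ (by simpa using hp) h1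
  simp at this

lemma annNC_iff (τ : Equiv.Perm (Fin (p + q))) (hdisc : ¬ AnnConnected p q τ) :
    AnnNC p q τ ↔ StdRel τ (gammaAnn p q) ∧ ¬ CrossGen τ (gammaAnn p q) := by
  have hd : ∀ x y : Fin (p + q), τ.SameCycle x y → (x : ℕ) < p → p ≤ (y : ℕ) → False := by
    intro x y hxy hx hy
    exact hdisc ⟨{b | τ.SameCycle x b}, ⟨x, rfl⟩, ⟨x, Equiv.Perm.SameCycle.refl _ _, hx⟩, ⟨y, hxy, hy⟩⟩
  have h2 : ¬ AC2 p q τ := by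
    rintro ⟨a, b, c, x, y, -, hx, hy, -, -, h, -⟩
    exact hd x y (h ▸ induced_sc τ _ x (by simp)) hx hy
  have h3 : ¬ AC3 p q τ := by
    rintro ⟨a, b, c, d, x, y, -, hx, hy, -, -, h, -⟩
    exact hd x y (h ▸ induced_sc τ _ x (by simp)) hx hy
  have h1 : AC1 p q τ ↔ CrossGen τ (gammaAnn p q) := Iff.rfl
  have hτ : ∀ x, induced τ {b | τ.SameCycle x b} x = τ x := fun x =>
    induced_eq 1 one_pos rfl (sc_apply τ x) (by omega)
  have orb : ∀ a b, τ.SameCycle a b → {c | τ.SameCycle a c} = {c | τ.SameCycle b c} := by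
    intro a b h
    ext c
    exact ⟨fun h' => h.symm.trans h', fun h' => h.trans h'⟩
  have eE : ∀ x : Fin (p + q), (x : ℕ) < p →
      {b | τ.SameCycle x b} ∩ extSet p q = {b | τ.SameCycle x b} := by
    intro x hx
    refine Set.inter_eq_left.2 (fun y hy => ?_)
    by_contra hc
    exact hd x y hy hx (not_lt.1 hc)
  have eI : ∀ x : Fin (p + q), p ≤ (x : ℕ) →
      {b | τ.SameCycle x b} ∩ intSet p q = {b | τ.SameCycle x b} := by
    intro x hx
    refine Set.inter_eq_left.2 (fun y hy => ?_)
    by_contra hc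
    exact hd y x (Equiv.Perm.SameCycle.symm hy) (not_le.1 hc) hx
  have hs : AnnStandard p q τ ↔ StdRel τ (gammaAnn p q) := by
    constructor
    · rintro ⟨h, -⟩ x
      obtain ⟨ha, hb⟩ := h {b | τ.SameCycle x b} ⟨x, rfl⟩
      rcases lt_or_ge (x : ℕ) p with hx | hx
      · have := ha x ⟨Equiv.Perm.SameCycle.refl _ _, hx⟩
        rw [eE x hx, hτ] at this
        rw [this]
        exact induced_congr fun k => ((iter_ext x hx k).1).symm
      · have := hb x ⟨Equiv.Perm.SameCycle.refl _ _, hx⟩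
        rw [eI x hx, hτ] at this
        rw [this]
        exact induced_congr fun k => ((iter_int x hx k).1).symm
    · intro h
      refine ⟨?_, ?_⟩
      · rintro A ⟨a, rfl⟩
        refine ⟨?_, ?_⟩
        · rintro b ⟨hab, hb⟩
          rw [orb a b hab, eE b hb, hτ, h b]
          exact induced_congr fun k => (iter_ext b hb k).1
        · rintro b ⟨hab, hb⟩
          rw [orb a b hab, eI b hb, hτ, h b]
          exact induced_congr fun k => (iter_int b hb k).1
      · intro A hA h1 h2
        exact absurd ⟨A, hA, h1, h2⟩ hdisc
  unfold AnnNC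
  rw [hs, h1]
  tauto
end Annular

/-- Theorem 6.1 2°: a `(p,q)`-disconnected permutation `τ` of `[p+q]` satisfies
`#(τ) + #(τ⁻¹γ) ≤ p+q+2`, and `τ ∈ S_ann-nc(p,q)` iff this inequality is an equality. -/
theorem stmt_16 (p q : ℕ) (hp : 0 < p) (hq : 0 < q)
    (τ : Equiv.Perm (Fin (p + q))) (hdisc : ¬ AnnConnected p q τ) :
    numOrbits τ + numOrbits (τ⁻¹ * gammaAnn p q) ≤ p + q + 2 ∧
      (AnnNC p q τ ↔ numOrbits τ + numOrbits (τ⁻¹ * gammaAnn p q) = p + q + 2) := by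

  have h := main_gen (Nat.card (Fin (p + q))) τ (gammaAnn p q) (by omega)
  rw [numOrbits_gammaAnn hp hq, Nat.card_fin] at h
  rw [annNC_iff τ hdisc, ← SNC_iff]
  exact h
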